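/- arXiv:2210.01284 — 2 statements merged into one kernel-verified Lean document; each statement's English description precedes it below -/
import Mathlib

section
/- Let λ < 0 and let Q : (0,1) → ℝ be the quantile function of the skew normal distribution SN(λ). Then, as u → 0⁺, Q(u) = -√(-2·log u)·(1 + (1/4)·log(-log u)/log u + ((log π)/4)/log u + r(u)), where the remainder satisfies r(u) = O((log(-log u)/log u)²) as u → 0⁺. -/
/-!
For `l < 0` and `t → -∞` the factor `Φ(l t)` of the skew normal density tends to `1`, so the left
tail of `SN(l)` is twice a normal tail. The Mills-ratio bounds `mills_upper` and `mills_lower`, both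
read off from one exact antiderivative (`mills_identity`), together with `1 - 1 / z² ≤ Φ(z) ≤ 1`,
give (`snCDF_tail`)
`-log F(-y) = y² / 2 + log y + log (π / 2) / 2 + e` with `0 ≤ e = O(1 / y²)`.

With `y = -Q u` and `L = -log u` this is an equation relating `y` and `L`, which `invert` solves
approximately: `y / √(2L) = 1 - (log L + log π) / (4L) + O((log L / L)²)`. Since `F` is monotone and
positive far to the left, `F (Q u) = u → 0` forces `Q u → -∞`, so the estimate applies for all small
`u`.
-/

open Real Filter Topology MeasureTheory Asymptotics

/-- The standard normal cumulative distribution function. -/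
noncomputable def stdNormalCDF (x : ℝ) : ℝ :=
  ∫ t in Set.Iic x, (Real.sqrt (2 * Real.pi))⁻¹ * Real.exp (-(t ^ 2) / 2)

/-- The cdf of the skew normal distribution `SN(l)`. -/
noncomputable def snCDF (l : ℝ) (x : ℝ) : ℝ :=
  ∫ t in Set.Iic x,
    2 * ((Real.sqrt (2 * Real.pi))⁻¹ * Real.exp (-(t ^ 2) / 2)) * stdNormalCDF (l * t)

lemma integrable_gauss : Integrable fun t : ℝ => exp (-(t ^ 2) / 2) := by
  convert integrable_exp_neg_mul_sq (b := 1 / 2) (by norm_num) using 3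
  ring

lemma integrable_dens : Integrable fun t : ℝ => (√(2 * π))⁻¹ * exp (-(t ^ 2) / 2) :=
  integrable_gauss.const_mul _

lemma integral_dens : ∫ t : ℝ, (√(2 * π))⁻¹ * exp (-(t ^ 2) / 2) = 1 := by
  have h := integral_gaussian (1 / 2)
  rw [integral_const_mul, show (fun t : ℝ => exp (-(t ^ 2) / 2)) = fun t => exp (-(1 / 2) * t ^ 2) by
    ext t; ring_nf, h, show π / (1 / 2) = 2 * π by ring]
  exact inv_mul_cancel₀ (by positivity)

lemma gauss_div_sq_integrableOn {y : ℝ} (hy : 0 < y) :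
    IntegrableOn (fun t : ℝ => exp (-(t ^ 2) / 2) / t ^ 2) (Set.Iic (-y)) := by
  refine Integrable.mono' (integrable_gauss.integrableOn.mul_const (1 / y ^ 2)) ?_ ?_
  · exact (by fun_prop : Measurable fun t : ℝ => exp (-(t ^ 2) / 2) / t ^ 2).aestronglyMeasurable
  · filter_upwards [ae_restrict_mem measurableSet_Iic] with t ht
    rw [Set.mem_Iic] at ht
    rw [norm_of_nonneg (by positivity), mul_one_div]
    have : y ^ 2 ≤ t ^ 2 := by nlinarith
    gcongr

/-- The function `-exp (-t² / 2) / t` is an antiderivative of `exp (-t² / 2) (1 + 1 / t²)`. -/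
lemma mills_identity {y : ℝ} (hy : 0 < y) :
    (∫ t in Set.Iic (-y), (exp (-(t ^ 2) / 2) + exp (-(t ^ 2) / 2) / t ^ 2))
      = exp (-(y ^ 2) / 2) / y := by
  have key := integral_Iic_of_hasDerivAt_of_tendsto' (a := -y) (m := 0)
    (f := fun t : ℝ => -exp (-(t ^ 2) / 2) / t)
    (f' := fun t => exp (-(t ^ 2) / 2) + exp (-(t ^ 2) / 2) / t ^ 2) ?_
    (integrable_gauss.integrableOn.add (gauss_div_sq_integrableOn hy)) ?_
  · rw [key]; simp [neg_div_neg_eq]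
  · intro t ht
    have ht0 : t ≠ 0 := by rw [Set.mem_Iic] at ht; linarith
    have h1 : HasDerivAt (fun t : ℝ => -(t ^ 2) / 2) (-t) t := by
      refine ((hasDerivAt_pow 2 t).neg.div_const 2).congr_deriv ?_
      push_cast; ring
    refine (h1.exp.neg.div (hasDerivAt_id t) ht0).congr_deriv ?_
    simp only [id, Pi.neg_apply]
    field_simp
    ring
  · have h : Tendsto (fun t : ℝ => t⁻¹) atBot (𝓝 0) := tendsto_inv_atBot_zero
    refine squeeze_zero_norm (fun t => ?_) (by simpa using h.norm)
    rw [norm_div, norm_neg, norm_eq_abs t, div_eq_mul_inv]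
    refine mul_le_of_le_one_left (by positivity) ?_
    rw [norm_of_nonneg (by positivity)]
    exact exp_le_one_iff.2 (by nlinarith [sq_nonneg t])

lemma mills_upper {y : ℝ} (hy : 0 < y) :
    ∫ t in Set.Iic (-y), exp (-(t ^ 2) / 2) ≤ exp (-(y ^ 2) / 2) / y := by
  rw [← mills_identity hy]
  refine setIntegral_mono_on integrable_gauss.integrableOn
    (integrable_gauss.integrableOn.add (gauss_div_sq_integrableOn hy)) measurableSet_Iic
    fun t _ => ?_
  have : 0 ≤ exp (-(t ^ 2) / 2) / t ^ 2 := by positivity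
  linarith

/-- Lower Mills-ratio bound `∫_{-∞}^{-y} exp (-t² / 2) ≥ (1 + 1 / y²)⁻¹ exp (-y² / 2) / y`: on the
domain of integration `1 / t² ≤ 1 / y²` in `mills_identity`. -/
lemma mills_lower {y : ℝ} (hy : 0 < y) :
    exp (-(y ^ 2) / 2) / y ≤ (1 + 1 / y ^ 2) * ∫ t in Set.Iic (-y), exp (-(t ^ 2) / 2) := by
  rw [← mills_identity hy, ← integral_const_mul]
  refine setIntegral_mono_on
    (integrable_gauss.integrableOn.add (gauss_div_sq_integrableOn hy))
    (integrable_gauss.integrableOn.const_mul _) measurableSet_Iic fun t ht => ?_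
  rw [Set.mem_Iic] at ht
  have : y ^ 2 ≤ t ^ 2 := by nlinarith
  have : exp (-(t ^ 2) / 2) / t ^ 2 ≤ exp (-(t ^ 2) / 2) / y ^ 2 := by gcongr
  calc _ ≤ exp (-(t ^ 2) / 2) + exp (-(t ^ 2) / 2) / y ^ 2 := by gcongr
    _ = _ := by ring

lemma stdNormalCDF_nonneg (z : ℝ) : 0 ≤ stdNormalCDF z :=
  setIntegral_nonneg measurableSet_Iic fun t _ => by positivity

lemma stdNormalCDF_mono : Monotone stdNormalCDF := fun a b hab =>
  setIntegral_mono_set integrable_dens.integrableOn (ae_of_all _ fun t => by positivity)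
    (Set.Iic_subset_Iic.2 hab).eventuallyLE

lemma stdNormalCDF_le_one (z : ℝ) : stdNormalCDF z ≤ 1 := by
  rw [← integral_dens]
  exact setIntegral_le_integral integrable_dens (ae_of_all _ fun t => by positivity)

/-- Convergence `Φ(z) → 1` at a rate that, for `z = l * (-y)`, is `O(1 / y²)`. This matches the
Mills-ratio error, so the much smaller true size of `1 - Φ(z)` is not needed. -/
lemma stdNormalCDF_lower {z : ℝ} (hz : 0 < z) : 1 - 1 / z ^ 2 ≤ stdNormalCDF z := by
  have h1 := intervalIntegral.integral_Iic_add_Ioi (b := z)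
    integrable_dens.integrableOn integrable_dens.integrableOn
  rw [integral_dens] at h1
  have h2 := integral_comp_neg_Iic (-z) (fun t : ℝ => (√(2 * π))⁻¹ * exp (-(t ^ 2) / 2))
  simp only [neg_sq, neg_neg] at h2
  rw [← h2, integral_const_mul (μ := volume.restrict (Set.Iic (-z)))] at h1
  have h3 : (√(2 * π))⁻¹ ≤ 1 := by
    refine inv_le_one_of_one_le₀ (one_le_sqrt.2 ?_)
    linarith [two_le_pi]
  have h4 : exp (-(z ^ 2) / 2) / z ≤ 1 / z ^ 2 := by
    rw [show -(z ^ 2) / 2 = -(z ^ 2 / 2) by ring, exp_neg, inv_eq_one_div, div_div]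
    refine one_div_le_one_div_of_le (by positivity) ?_
    rw [sq z]
    refine mul_le_mul_of_nonneg_right ?_ hz.le
    nlinarith [add_one_le_exp (z * z / 2), sq_nonneg (z - 1)]
  have h5 : (√(2 * π))⁻¹ * ∫ t in Set.Iic (-z), exp (-(t ^ 2) / 2) ≤ 1 / z ^ 2 := by
    refine (mul_le_of_le_one_left ?_ h3).trans ((mills_upper hz).trans h4)
    exact setIntegral_nonneg measurableSet_Iic fun t _ => by positivity
  unfold stdNormalCDF
  linarith

lemma integrable_snDens (l : ℝ) : Integrable fun t : ℝ =>
    2 * ((√(2 * π))⁻¹ * exp (-(t ^ 2) / 2)) * stdNormalCDF (l * t) := by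
  refine (integrable_dens.const_mul 2).mul_bdd (c := 1) ?_ ?_
  · exact (stdNormalCDF_mono.measurable.comp (measurable_const_mul l)).aestronglyMeasurable
  · exact ae_of_all _ fun t => by
      rw [norm_of_nonneg (stdNormalCDF_nonneg _)]; exact stdNormalCDF_le_one _

lemma snCDF_mono (l : ℝ) : Monotone (snCDF l) := fun a b hab =>
  setIntegral_mono_set (integrable_snDens l).integrableOn
    (ae_of_all _ fun t => mul_nonneg (by positivity) (stdNormalCDF_nonneg _))
    (Set.Iic_subset_Iic.2 hab).eventuallyLE

lemma const_eq : 2 * (√(2 * π))⁻¹ = √2 / √π := by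
  rw [sqrt_mul (by norm_num)]
  have : √2 * √2 = 2 := mul_self_sqrt (by norm_num)
  field_simp
  linarith

/-- Tail upper bound, from `Φ ≤ 1`. -/
lemma snCDF_upper (l : ℝ) {y : ℝ} (hy : 0 < y) :
    snCDF l (-y) ≤ √2 / √π * (exp (-(y ^ 2) / 2) / y) := by
  calc snCDF l (-y) ≤ ∫ t in Set.Iic (-y), √2 / √π * exp (-(t ^ 2) / 2) := by
        refine setIntegral_mono_on (integrable_snDens l).integrableOn
          (integrable_gauss.integrableOn.const_mul _) measurableSet_Iic fun t _ => ?_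
        rw [← const_eq, ← mul_assoc]
        exact mul_le_of_le_one_right (by positivity) (stdNormalCDF_le_one _)
    _ ≤ _ := by
        rw [integral_const_mul]
        exact mul_le_mul_of_nonneg_left (mills_upper hy) (by positivity)

/-- Tail lower bound: for `t ≤ -y` and `l < 0` one has `l * t ≥ l * (-y) > 0`, so the factor
`Φ(l * t)` is at least `1 - 1 / (l * y)²`. -/
lemma snCDF_lower {l : ℝ} (hl : l < 0) {y : ℝ} (hy : 0 < y) (hly : 1 ≤ (l * y) ^ 2) :
    (1 - 1 / (l * y) ^ 2) / (1 + 1 / y ^ 2) * (√2 / √π * (exp (-(y ^ 2) / 2) / y))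
      ≤ snCDF l (-y) := by
  have hz : 0 < l * -y := by nlinarith
  have hk : 0 ≤ 1 - 1 / (l * y) ^ 2 := by
    rw [sub_nonneg]; exact (div_le_one (by linarith)).2 hly
  have h0 : √2 / √π * (1 - 1 / (l * y) ^ 2) * ∫ t in Set.Iic (-y), exp (-(t ^ 2) / 2)
      ≤ snCDF l (-y) := by
    rw [← integral_const_mul]
    refine setIntegral_mono_on (integrable_gauss.integrableOn.const_mul _)
      (integrable_snDens l).integrableOn measurableSet_Iic fun t ht => ?_
    have h1 : 1 - 1 / (l * y) ^ 2 ≤ stdNormalCDF (l * t) := by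
      have h2 := (stdNormalCDF_lower hz).trans
        (stdNormalCDF_mono (mul_le_mul_of_nonpos_left (Set.mem_Iic.1 ht) hl.le))
      simpa [mul_neg] using h2
    rw [← mul_assoc, const_eq, mul_right_comm]
    exact mul_le_mul_of_nonneg_left h1 (by positivity)
  refine le_trans ?_ h0
  have h3 := mills_lower hy
  rw [div_mul_eq_mul_div, div_le_iff₀ (by positivity)]
  have h4 := mul_le_mul_of_nonneg_left h3
    (show 0 ≤ √2 / √π * (1 - 1 / (l * y) ^ 2) from mul_nonneg (by positivity) hk)
  linarith

/-- Two-sided tail asymptotics: `-log F(-y) = y² / 2 + log y + log (π / 2) / 2 + O(1 / y²)`, with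
a nonnegative error. -/
lemma snCDF_tail {l : ℝ} (hl : l < 0) {y : ℝ} (hy : 0 < y) (hly : 2 ≤ (l * y) ^ 2) :
    0 < snCDF l (-y) ∧
    0 ≤ -log (snCDF l (-y)) - (y ^ 2 / 2 + log y + (log π - log 2) / 2) ∧
    -log (snCDF l (-y)) - (y ^ 2 / 2 + log y + (log π - log 2) / 2)
      ≤ (2 / l ^ 2 + 1) / y ^ 2 := by
  have hlow := snCDF_lower hl hy (by linarith)
  have hup := snCDF_upper l hy
  have hk : 1 / 2 ≤ 1 - 1 / (l * y) ^ 2 := by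
    have : 1 / (l * y) ^ 2 ≤ 1 / 2 := one_div_le_one_div_of_le (by norm_num) hly
    linarith
  have hk0 : 0 < 1 - 1 / (l * y) ^ 2 := by linarith
  have hpos : 0 < snCDF l (-y) := lt_of_lt_of_le (by positivity) hlow
  have hlogmain : log (√2 / √π * (exp (-(y ^ 2) / 2) / y))
      = -(y ^ 2 / 2 + log y + (log π - log 2) / 2) := by
    rw [log_mul (by positivity) (by positivity), log_div (by positivity) (by positivity),
      log_div (by positivity) (by positivity), log_exp, log_sqrt (by positivity),
      log_sqrt (by positivity)]
    ring
  have h1 := log_le_log hpos hup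
  have h2 := log_le_log (by positivity) hlow
  rw [log_mul (by positivity) (by positivity), log_div (by positivity) (by positivity)] at h2
  rw [hlogmain] at h1 h2
  have h3 : log (1 + 1 / y ^ 2) ≤ 1 / y ^ 2 := by
    have := log_le_sub_one_of_pos (show 0 < 1 + 1 / y ^ 2 by positivity)
    linarith
  have h4 : -(2 / (l * y) ^ 2) ≤ log (1 - 1 / (l * y) ^ 2) := by
    refine le_trans ?_ (one_sub_inv_le_log_of_pos hk0)
    have : (1 - 1 / (l * y) ^ 2)⁻¹ ≤ 1 + 2 / (l * y) ^ 2 := by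
      rw [inv_le_iff_one_le_mul₀ hk0, show 2 / (l * y) ^ 2 = 2 * (1 / (l * y) ^ 2) by ring]
      have : 0 ≤ 1 / (l * y) ^ 2 := by positivity
      nlinarith
    linarith
  have h5 : (2 / l ^ 2 + 1) / y ^ 2 = 2 / (l * y) ^ 2 + 1 / y ^ 2 := by
    have := hl.ne
    field_simp
  refine ⟨hpos, by linarith, by linarith⟩

/-- Inversion of the tail asymptotics. Put `s = y / √(2L)` and `a = (log L + log π) / (4L)`. The
hypothesis reads `s² = 1 - 2a + (-log (s²) / 2 - e) / L`, and `-log (s²) = O(1 - s²) = O(log L / L)`,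
so `s² - (1 - a)² = O((log L / L)²)`; division by `s + (1 - a) ≥ 1 / 2` gives the claim. -/
lemma invert {C y L e : ℝ} (hC : 0 ≤ C) (hy : 4 + 2 * C ≤ y) (hL : 1 ≤ log L) (hLpos : 0 < L)
    (he0 : 0 ≤ e) (heC : e ≤ C / y ^ 2)
    (h : L = y ^ 2 / 2 + log y + (log π - log 2) / 2 + e) :
    |y / √(2 * L) - 1 + (log L + log π) / (4 * L)| ≤ (6 + 4 * C) * (log L / L) ^ 2 := by
  have hy1 : 1 ≤ y := by linarith
  have hy0 : 0 < y := by linarith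
  have hlogy0 : 0 ≤ log y := log_nonneg hy1
  have hlogy1 : log y ≤ y - 1 := log_le_sub_one_of_pos hy0
  have hl2 : 0 < log 2 := log_pos (by norm_num)
  have hl2' : log 2 ≤ 1 := by linarith [log_two_lt_d9]
  have hlpi : log π ≤ 2 := by
    have h1 : log π ≤ log 4 := log_le_log pi_pos pi_le_four
    have h2 : log 4 = 2 * log 2 := by
      rw [show (4 : ℝ) = 2 ^ 2 by norm_num, log_pow]; norm_num
    linarith
  have hlpi2 : log 2 ≤ log π := log_le_log (by norm_num) two_le_pi
  have hey : e ≤ C := heC.trans (div_le_self hC (by nlinarith))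
  have hL1 : y ^ 2 / 2 ≤ L := by linarith
  have hL2 : L ≤ y ^ 2 := by nlinarith
  have hLone : 1 ≤ L := by nlinarith
  have hlL : log L ≤ L := by linarith [log_le_sub_one_of_pos hLpos]
  have heL : e ≤ C / L := heC.trans (div_le_div_of_nonneg_left hC hLpos hL2)
  have hlogy : log y ≤ log L := by
    have : log (y ^ 2) ≤ log (2 * L) := log_le_log (by positivity) (by linarith)
    rw [log_pow, log_mul (by norm_num) hLpos.ne'] at this
    push_cast at this
    linarith
  set s := y / √(2 * L) with hs
  set x := log L / L with hx
  set a := (log L + log π) / (4 * L) with ha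
  have hxpos : 0 < x := by positivity
  have hx1 : x ≤ 1 := (div_le_one hLpos).2 hlL
  have hinvx : 1 / L ≤ x := by rw [hx]; gcongr
  have ha0 : 0 ≤ a := by have : 0 ≤ log π := by linarith
                         positivity
  have hax : a ≤ x := by
    rw [ha, hx, div_le_div_iff₀ (by positivity) hLpos]
    nlinarith
  have hs0 : 0 ≤ s := by positivity
  have hs2 : s ^ 2 = y ^ 2 / (2 * L) := by
    rw [hs, div_pow, sq_sqrt (by positivity)]
  have hs2half : 1 / 2 ≤ s ^ 2 := by
    rw [hs2, div_le_div_iff₀ (by norm_num) (by positivity)]; linarith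
  have hs2one : s ^ 2 ≤ 1 := by
    rw [hs2, div_le_one (by positivity)]; linarith
  have hshalf : 1 / 2 ≤ s := by nlinarith
  have hdiff : 1 - s ^ 2 = (log y + (log π - log 2) / 2 + e) / L := by
    rw [hs2]; field_simp; linarith
  have hdiff' : 1 - s ^ 2 ≤ (2 + C) * x := by
    rw [hdiff, hx, ← mul_div_assoc]
    gcongr
    nlinarith
  have hlogs : log (s ^ 2) = 2 * log y - log 2 - log L := by
    rw [hs2, log_div (by positivity) (by positivity), log_pow, log_mul (by norm_num) hLpos.ne']
    push_cast; ring
  have hlogs0 : log (s ^ 2) ≤ 0 := log_nonpos (by positivity) hs2one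
  have hlogs1 : -log (s ^ 2) ≤ 2 * (1 - s ^ 2) := by
    have h1 := one_sub_inv_le_log_of_pos (show 0 < s ^ 2 by linarith)
    have h2 : (s ^ 2)⁻¹ - 1 ≤ 2 * (1 - s ^ 2) := by
      rw [sub_le_iff_le_add, inv_le_iff_one_le_mul₀ (by linarith)]
      nlinarith
    linarith
  -- The logarithms cancel to leading order in `s² - (1 - a)²`.
  have hnum : s ^ 2 - (1 - a) ^ 2 = (-log (s ^ 2) / 2 - e) / L - a ^ 2 := by
    have : s ^ 2 = 1 - (log y + (log π - log 2) / 2 + e) / L := by linarith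
    rw [hlogs, this, ha]; field_simp; ring
  have hA0 : 0 ≤ (-log (s ^ 2) / 2) / L := div_nonneg (by linarith) hLpos.le
  have hA : (-log (s ^ 2) / 2) / L ≤ (2 + C) * x ^ 2 := by
    calc (-log (s ^ 2) / 2) / L = (-log (s ^ 2) / 2) * (1 / L) := by ring
      _ ≤ ((2 + C) * x) * x := by gcongr; linarith
      _ = _ := by ring
  have hE0 : 0 ≤ e / L := by positivity
  have hE : e / L ≤ C * x ^ 2 := by
    calc e / L ≤ (C / L) / L := by gcongr
      _ = C * (1 / L) ^ 2 := by field_simp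
      _ ≤ _ := by gcongr
  have ha2 : a ^ 2 ≤ x ^ 2 := by gcongr
  have hfac : (s - 1 + a) * (s + (1 - a)) = s ^ 2 - (1 - a) ^ 2 := by ring
  have hden : 1 / 2 ≤ s + (1 - a) := by linarith
  have habs : |s ^ 2 - (1 - a) ^ 2| ≤ (3 + 2 * C) * x ^ 2 := by
    rw [hnum, sub_div, abs_le]
    have := sq_nonneg x
    have := sq_nonneg a
    have := mul_nonneg hC (sq_nonneg x)
    rw [add_mul] at hA
    rw [add_mul, mul_assoc]
    constructor <;> linarith
  rw [← hfac, abs_mul, abs_of_nonneg (by linarith : 0 ≤ s + (1 - a))] at habs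
  have := mul_le_mul_of_nonneg_left hden (abs_nonneg (s - 1 + a))
  linarith

/-- Quantile expansion of `SN(l)` for `l < 0`, as `u → 0⁺`. -/
theorem snQuantile_expansion_neg (l : ℝ) (hl : l < 0) (Q : ℝ → ℝ)
    (hQ : ∀ u ∈ Set.Ioo (0 : ℝ) 1, snCDF l (Q u) = u) :
    ∃ r : ℝ → ℝ,
      (∀ᶠ u in 𝓝[>] (0 : ℝ), Q u =
        -Real.sqrt (-2 * Real.log u) *
          (1 + (1 / 4) * Real.log (-Real.log u) / Real.log u
            + (Real.log Real.pi / 4) / Real.log u + r u)) ∧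
      r =O[𝓝[>] (0 : ℝ)] fun u => (Real.log (-Real.log u) / Real.log u) ^ 2 := by
  set C : ℝ := 2 / l ^ 2 + 1 with hCdef
  have hC : 0 ≤ C := by positivity
  have hlog : Tendsto (fun u => -log u) (𝓝[>] (0 : ℝ)) atTop :=
    tendsto_neg_atBot_atTop.comp tendsto_log_nhdsGT_zero
  have hloglog : Tendsto (fun u => log (-log u)) (𝓝[>] (0 : ℝ)) atTop :=
    tendsto_log_atTop.comp hlog
  have hu01 : ∀ᶠ u in 𝓝[>] (0 : ℝ), u ∈ Set.Ioo (0 : ℝ) 1 := Ioo_mem_nhdsGT one_pos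
  -- Threshold beyond which both the tail estimate and its inversion apply.
  set M : ℝ := max (4 + 2 * C) (-2 / l) with hM
  have hM0 : 0 < M := lt_of_lt_of_le (by linarith) (le_max_left _ _)
  have hly : ∀ y, M ≤ y → 2 ≤ (l * y) ^ 2 := by
    intro y hy
    have h1 : -2 / l ≤ y := (le_max_right _ _).trans hy
    have h2 : l * y ≤ -2 := by
      rw [div_le_iff_of_neg hl] at h1; linarith
    nlinarith
  have hQM : ∀ᶠ u in 𝓝[>] (0 : ℝ), M ≤ -Q u := by
    have hF : 0 < snCDF l (-M) := (snCDF_tail hl hM0 (hly M le_rfl)).1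
    filter_upwards [hu01, Ioo_mem_nhdsGT hF] with u hu hu'
    by_contra! hlt
    have := snCDF_mono l (show -M ≤ Q u by linarith)
    rw [hQ u hu] at this
    exact absurd hu'.2 (not_lt.2 this)
  refine ⟨fun u => -Q u / √(-2 * log u)
    - (1 + (1 / 4) * log (-log u) / log u + (log π / 4) / log u), ?_, ?_⟩
  · filter_upwards [hlog.eventually_gt_atTop 0] with u hu
    have hs : √(-2 * log u) ≠ 0 := (sqrt_pos.2 (by linarith)).ne'
    rw [add_sub_cancel, neg_mul, mul_div_cancel₀ _ hs, neg_neg]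
  · refine IsBigO.of_bound (6 + 4 * C) ?_
    filter_upwards [hu01, hQM, hlog.eventually_gt_atTop 0, hloglog.eventually_ge_atTop 1]
      with u hu hMu hL0 hL1
    have hy0 : 0 < -Q u := hM0.trans_le hMu
    obtain ⟨-, he0, heC⟩ := snCDF_tail hl hy0 (hly _ hMu)
    rw [neg_neg, hQ u hu] at he0 heC
    have key := invert hC ((le_max_left _ _).trans hMu) hL1 hL0 he0 heC (by ring)
    rw [norm_eq_abs, norm_of_nonneg (sq_nonneg _)]
    have hne : log u ≠ 0 := by linarith
    convert key using 2
    · rw [show 2 * -log u = -2 * log u by ring]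
      field_simp
      ring
    · ring
end

section
/- Let ρ ∈ (-1,1), α₁ ≠ 0, α₂ ∈ ℝ, and set λ₂ = (α₂ + ρα₁)/√(1+α₁²(1-ρ²)). Let γ₁ > 0 be a constant with γ₁ - ρ > 0, and let f₁, f₂ : (0,1) → ℝ satisfy f₂(u) → -∞ and f₂(u)·(f₁(u)/f₂(u) - γ₁) → 0 as u → 0⁺. Put A(u) = f₁(u) - ρ·f₂(u), B(u) = α₁·f₁(u) + α₂·f₂(u), β₁ = (γ₁-ρ)/(1-ρ²) + α₁·(α₁γ₁+α₂), and J(u) = (α₁·√(1-ρ²)/Φ(λ₂·f₂(u)))·∫_{-∞}^{A(u)/√(1-ρ²)} Φ(x)·(2π)^{-1/2}·e^{-(α₁√(1-ρ²)·x + (α₂+ρα₁)·f₂(u))²/2} dx. Then, as u → 0⁺: if β₁ > 0, J(u) ~ α₁·√(1-ρ²)·e^{-A(u)²/(2(1-ρ²)) - B(u)²/2} / (2π·Φ(λ₂f₂(u))·|f₂(u)|·|A(u)|·β₁); if β₁ = 0, J(u) ~ α₁·(1-ρ²)·e^{-λ₂²·f₂(u)²/2} / (2·√(2π)·Φ(λ₂f₂(u))·|A(u)|·√(1+α₁²(1-ρ²)));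 if β₁ < 0, J(u) ~ α₁·e^{-λ₂²·f₂(u)²/2} / (√(2π)·Φ(λ₂f₂(u))·|α₁·λ₂·f₂(u)|). Here f ~ g means f/g → 1 as u → 0⁺. -/
/-!
Write `Φ = φ R`, where `φ` is the normal density and `R` the Mills ratio. With `s = √(1 - ρ²)`,
`a = α₁ s`, `b = α₂ + ρ α₁` and `q = 1 + a²`, completing the square
(`integral_stdNormalCDF_mul_density`) turns the integral into
`(2π)⁻¹ exp(-λ₂² f₂² / 2) ∫_{-∞}^y R(x) exp(-q (x - m)² / 2) dx`, with endpoint `y = A / s → -∞` and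
Gaussian centre `m = -a b f₂ / q`. The hypothesis on `f₁ / f₂` says `A = (γ₁ - ρ) f₂ + o(1)`, whence
`y - m = (s β₁ / q) f₂ + o(1)`. The sign of `β₁` thus decides where the endpoint lies relative to the
centre:

* `β₁ > 0`: `y - m → -∞`, and the integral concentrates at the endpoint
  (`tendsto_integral_millsRatio_endpoint`);
* `β₁ = 0`: `y - m → 0`, and half of the Gaussian survives;
* `β₁ < 0`: `y - m → +∞`, and the whole Gaussian survives (both cases are
  `tendsto_integral_millsRatio_peak`).

The limits of these integrals are instances of dominated convergence, the domination coming from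
`|x| R(x) ≤ 1` for `x < 0`, and the pointwise limits from `|x| R(x) → 1` as `x → -∞`. Both facts
follow from the representation `R(x) = ∫_0^∞ exp(x w - w² / 2) dw`.
-/

open Real Filter Topology MeasureTheory

/-! ### The Mills ratio of the normal law -/

/-- The Mills ratio `Φ(x) / φ(x)` of the lower tail of the standard normal law, where
`φ(x) = (2π)^(-1/2) exp(-x²/2)` is its density. -/
noncomputable def millsRatio (x : ℝ) : ℝ :=
  stdNormalCDF x * (√(2 * π) * Real.exp (x ^ 2 / 2))

lemma integral_Iic_eq_integral_Ioi_sub (g : ℝ → ℝ) (x : ℝ) :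
    ∫ t in Set.Iic x, g t = ∫ w in Set.Ioi 0, g (x - w) := by
  rw [← integral_Ici_eq_integral_Ioi, ← integral_indicator measurableSet_Iic,
    ← integral_indicator measurableSet_Ici, ← integral_sub_left_eq_self _ volume x]
  congr 1
  ext w
  simp [Set.indicator]

lemma integrable_normal_density :
    Integrable (fun t : ℝ => (√(2 * π))⁻¹ * Real.exp (-(t ^ 2) / 2)) := by
  have h := (integrable_exp_neg_mul_sq (b := 1 / 2) (by norm_num)).const_mul (√(2 * π))⁻¹
  refine h.congr (Eventually.of_forall fun t => ?_)
  simp only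
  ring_nf

lemma stdNormalCDF_pos (x : ℝ) : 0 < stdNormalCDF x := by
  unfold stdNormalCDF
  rw [setIntegral_pos_iff_support_of_nonneg_ae]
  · have : Function.support (fun t : ℝ => (√(2 * π))⁻¹ * Real.exp (-(t ^ 2) / 2)) = Set.univ := by
      ext t
      simp only [Function.mem_support, Set.mem_univ, iff_true]
      positivity
    rw [this]
    simp
  · exact Eventually.of_forall fun t => by simp only [Pi.zero_apply]; positivity
  · exact integrable_normal_density.integrableOn

lemma measurable_stdNormalCDF : Measurable stdNormalCDF := by
  refine Monotone.measurable fun x y hxy => ?_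
  exact setIntegral_mono_set integrable_normal_density.integrableOn
    (Eventually.of_forall fun t => by simp only [Pi.zero_apply]; positivity)
    (Set.Iic_subset_Iic.2 hxy).eventuallyLE

lemma measurable_millsRatio : Measurable millsRatio := by
  unfold millsRatio
  exact measurable_stdNormalCDF.mul (by fun_prop)

lemma millsRatio_nonneg (x : ℝ) : 0 ≤ millsRatio x := by
  have := stdNormalCDF_pos x
  unfold millsRatio
  positivity

lemma stdNormalCDF_eq_millsRatio (x : ℝ) :
    stdNormalCDF x = (√(2 * π))⁻¹ * (millsRatio x * Real.exp (-x ^ 2 / 2)) := by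
  have h1 : Real.exp (x ^ 2 / 2) * Real.exp (-x ^ 2 / 2) = 1 := by
    rw [← Real.exp_add]; ring_nf; simp
  have h2 : (√(2 * π))⁻¹ * √(2 * π) = 1 := inv_mul_cancel₀ (by positivity)
  unfold millsRatio
  linear_combination -(stdNormalCDF x) * (h1 * (√(2 * π))⁻¹ * √(2 * π) + h2)

/-- The Mills ratio is the Laplace transform of the half-Gaussian: this is the substitution
`t = x - w` in the integral defining `Φ`. -/
lemma millsRatio_eq_integral (x : ℝ) :
    millsRatio x = ∫ w in Set.Ioi (0 : ℝ), Real.exp (-w ^ 2 / 2) * Real.exp (x * w) := by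
  unfold millsRatio stdNormalCDF
  rw [integral_Iic_eq_integral_Ioi_sub, ← integral_mul_const]
  congr 1
  ext w
  have h2 : (√(2 * π))⁻¹ * √(2 * π) = 1 := inv_mul_cancel₀ (by positivity)
  have h1 : Real.exp (-(x - w) ^ 2 / 2) * Real.exp (x ^ 2 / 2) =
      Real.exp (-w ^ 2 / 2) * Real.exp (x * w) := by
    rw [← Real.exp_add, ← Real.exp_add]; ring_nf
  linear_combination h1 * (√(2 * π))⁻¹ * √(2 * π) +
    Real.exp (-w ^ 2 / 2) * Real.exp (x * w) * h2

lemma neg_mul_millsRatio_le_one {x : ℝ} (hx : x < 0) : -x * millsRatio x ≤ 1 := by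
  have hint : IntegrableOn (fun w => Real.exp (x * w)) (Set.Ioi 0) :=
    integrableOn_exp_mul_Ioi hx 0
  have h : millsRatio x ≤ ∫ w in Set.Ioi (0 : ℝ), Real.exp (x * w) := by
    rw [millsRatio_eq_integral]
    refine integral_mono_of_nonneg (Eventually.of_forall fun w => by
      simp only [Pi.zero_apply]; positivity) hint (Eventually.of_forall fun w => ?_)
    simp only
    have : Real.exp (-w ^ 2 / 2) ≤ 1 := Real.exp_le_one_iff.2 (by nlinarith [sq_nonneg w])
    exact mul_le_of_le_one_left (Real.exp_pos _).le this
  rw [integral_exp_mul_Ioi hx 0] at h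
  simp only [mul_zero, Real.exp_zero] at h
  calc -x * millsRatio x ≤ -x * (-1 / x) := mul_le_mul_of_nonneg_left h (by linarith)
    _ = 1 := by rw [neg_mul, mul_div_cancel₀ _ hx.ne, neg_neg]

/-! ### Asymptotics of the Mills ratio -/

/-- Watson-type lemma: against a sharply decaying exponential, only the values of the integrand
near `0`, at scale `1 / k`, contribute to the integral. -/
lemma tendsto_mul_integral_mul_exp {ι : Type*} {l : Filter ι} [l.IsCountablyGenerated]
    {c : ℝ} (hc : 0 < c) {k : ι → ℝ} (hk : Tendsto k l atTop) {G : ι → ℝ → ℝ}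
    (hmeas : ∀ i, Measurable (G i)) (hG : ∀ᶠ i in l, ∀ w, 0 < w → |G i w| ≤ 1)
    (hlim : ∀ v, 0 < v → Tendsto (fun i => G i (v / k i)) l (𝓝 1)) :
    Tendsto (fun i => k i * ∫ w in Set.Ioi (0 : ℝ), G i w * Real.exp (-c * k i * w)) l
      (𝓝 (1 / c)) := by
  have key : Tendsto (fun i => ∫ v in Set.Ioi (0 : ℝ), G i (v / k i) * Real.exp (-c * v)) l
      (𝓝 (∫ v in Set.Ioi (0 : ℝ), Real.exp (-c * v))) := by
    refine tendsto_integral_filter_of_dominated_convergence (fun v => Real.exp (-c * v))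
      (Eventually.of_forall fun i => ?_) ?_ (integrableOn_exp_mul_Ioi (by linarith) 0) ?_
    · exact (((hmeas i).comp (measurable_id.div_const _)).mul (by fun_prop)).aestronglyMeasurable
    · filter_upwards [hG, hk.eventually_gt_atTop 0] with i hi hki
      filter_upwards [ae_restrict_mem measurableSet_Ioi] with v hv
      rw [norm_mul, Real.norm_eq_abs, Real.norm_eq_abs, Real.abs_exp]
      exact mul_le_of_le_one_left (Real.exp_pos _).le (hi _ (div_pos hv hki))
    · filter_upwards [ae_restrict_mem measurableSet_Ioi] with v hv
      simpa using (hlim v hv).mul_const (Real.exp (-c * v))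
  rw [integral_exp_mul_Ioi (by linarith) 0] at key
  have e : -Real.exp (-c * 0) / -c = 1 / c := by simp
  rw [e] at key
  refine key.congr' ?_
  filter_upwards [hk.eventually_gt_atTop 0] with i hki
  have := integral_comp_mul_left_Ioi (fun v => G i (v / k i) * Real.exp (-c * v)) 0 hki
  simp only [mul_zero, smul_eq_mul] at this
  have h2 : ∫ w in Set.Ioi (0 : ℝ), G i w * Real.exp (-c * k i * w) =
      ∫ w in Set.Ioi (0 : ℝ), G i (k i * w / k i) * Real.exp (-c * (k i * w)) := by
    congr 1
    ext w
    rw [mul_div_cancel_left₀ _ hki.ne', mul_assoc]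
  rw [h2, this, ← mul_assoc, mul_inv_cancel₀ hki.ne', one_mul]

lemma tendsto_neg_mul_millsRatio : Tendsto (fun x => -x * millsRatio x) atBot (𝓝 1) := by
  have h := tendsto_mul_integral_mul_exp (l := atBot) (c := 1) one_pos
    (k := fun x : ℝ => -x) tendsto_neg_atBot_atTop (G := fun _ w => Real.exp (-w ^ 2 / 2))
    (fun _ => by fun_prop) (Eventually.of_forall fun _ w _ => by
      rw [Real.abs_exp]; exact Real.exp_le_one_iff.2 (by nlinarith [sq_nonneg w]))
    (fun v _ => by
      have h0 : Tendsto (fun x : ℝ => v / -x) atBot (𝓝 0) :=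
        tendsto_const_nhds.div_atTop tendsto_neg_atBot_atTop
      have hc : Continuous fun w : ℝ => Real.exp (-w ^ 2 / 2) := by fun_prop
      simpa [Function.comp_def] using (hc.tendsto 0).comp h0)
  simpa [millsRatio_eq_integral] using h

/-- A bounded shift of the argument does not affect the asymptotics `1 / |m|` of the Mills ratio. -/
lemma tendsto_neg_mul_millsRatio_add {ι : Type*} {l : Filter ι} {m d : ι → ℝ} {d₀ : ℝ}
    (hm : Tendsto m l atBot) (hd : Tendsto d l (𝓝 d₀)) :
    Tendsto (fun i => -m i * millsRatio (m i + d i)) l (𝓝 1) := by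
  have hmd : Tendsto (fun i => m i + d i) l atBot := hm.atBot_add hd
  have hr : Tendsto (fun i => d i / (m i + d i)) l (𝓝 0) := hd.div_atBot hmd
  have := (tendsto_const_nhds (x := (1 : ℝ)).sub hr).mul (tendsto_neg_mul_millsRatio.comp hmd)
  simp only [sub_zero, mul_one] at this
  refine this.congr' ?_
  filter_upwards [hmd.eventually_lt_atBot 0] with i hi
  have := hi.ne
  simp only [Function.comp]
  field_simp
  ring

/-! ### Gaussian integrals of the Mills ratio -/

/-- Laplace's method when the centre `m` of the Gaussian factor lies inside, or asymptotically at
the end of, the range of integration `(-∞, y]`. Translated by `-m`, that range converges to `S`, and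
the Mills ratio may be replaced by its value `1 / |m|` at the peak. -/
lemma tendsto_integral_millsRatio_peak {ι : Type*} {l : Filter ι} [l.IsCountablyGenerated]
    {q C : ℝ} (hq : 0 < q) {m y : ι → ℝ} (hm : Tendsto m l atBot) (hy : Tendsto y l atBot)
    (hmy : Tendsto (fun i => m i / y i) l (𝓝 C)) {S : Set ℝ} (hS : MeasurableSet S)
    (hmem : ∀ z : ℝ, z ≠ 0 → ∀ᶠ i in l, (z ≤ y i - m i ↔ z ∈ S)) :
    Tendsto (fun i => -m i * ∫ x in Set.Iic (y i), millsRatio x * Real.exp (-q * (x - m i) ^ 2 / 2))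
      l (𝓝 (∫ z in S, Real.exp (-(q / 2) * z ^ 2))) := by
  have shift : ∀ i, -m i * ∫ x in Set.Iic (y i), millsRatio x * Real.exp (-q * (x - m i) ^ 2 / 2)
      = ∫ z, (Set.Iic (y i - m i)).indicator
        (fun z => -m i * millsRatio (m i + z) * Real.exp (-(q / 2) * z ^ 2)) z := by
    intro i
    rw [← integral_const_mul, ← integral_indicator measurableSet_Iic,
      ← integral_add_left_eq_self _ (m i)]
    congr 1
    ext z
    simp only [Set.indicator, Set.mem_Iic, le_sub_iff_add_le', add_sub_cancel_left]
    split_ifs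
    · rw [mul_assoc]; ring_nf
    · rfl
  simp only [shift]
  rw [← integral_indicator hS]
  have hgauss : Integrable fun z : ℝ => Real.exp (-(q / 2) * z ^ 2) :=
    integrable_exp_neg_mul_sq (half_pos hq)
  refine tendsto_integral_filter_of_dominated_convergence
    (fun z => (C + 1) * Real.exp (-(q / 2) * z ^ 2))
    (Eventually.of_forall fun i => ?_) ?_ (hgauss.const_mul _) ?_
  · refine (Measurable.indicator ?_ measurableSet_Iic).aestronglyMeasurable
    exact ((measurable_millsRatio.comp (measurable_const_add _)).const_mul _).mul (by fun_prop)
  · filter_upwards [hm.eventually_lt_atBot 0, hy.eventually_lt_atBot 0,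
      hmy.eventually_lt_const (lt_add_one C)] with i hmi hyi hC
    have hC0 : 0 ≤ m i / y i := div_nonneg_of_nonpos hmi.le hyi.le
    refine Eventually.of_forall fun z => ?_
    by_cases hz : z ∈ Set.Iic (y i - m i)
    · rw [Set.indicator_of_mem hz, norm_mul, Real.norm_eq_abs (Real.exp _), Real.abs_exp]
      refine mul_le_mul_of_nonneg_right ?_ (Real.exp_pos _).le
      have hzy : m i + z ≤ y i := by have := Set.mem_Iic.1 hz; linarith
      have hR := millsRatio_nonneg (m i + z)
      -- On the range of integration the argument is at most `y`, so `-y * millsRatio ≤ 1` there.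
      have h1 : -y i * millsRatio (m i + z) ≤ 1 :=
        (mul_le_mul_of_nonneg_right (by linarith) hR).trans
          (neg_mul_millsRatio_le_one (hzy.trans_lt hyi))
      have h2 : -m i * millsRatio (m i + z) = m i / y i * (-y i * millsRatio (m i + z)) := by
        have := hyi.ne
        field_simp
      rw [Real.norm_eq_abs, abs_of_nonneg (mul_nonneg (by linarith) hR), h2]
      calc _ ≤ m i / y i * 1 := mul_le_mul_of_nonneg_left h1 hC0
        _ ≤ C + 1 := by linarith
    · rw [Set.indicator_of_notMem hz, norm_zero]
      exact mul_nonneg (by linarith) (Real.exp_pos _).le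
  · have h0 : ∀ᵐ z : ℝ, z ≠ 0 := by simp [ae_iff]
    filter_upwards [h0] with z hz
    have hlim : Tendsto (fun i => S.indicator
        (fun z => -m i * millsRatio (m i + z) * Real.exp (-(q / 2) * z ^ 2)) z) l
        (𝓝 (S.indicator (fun z => Real.exp (-(q / 2) * z ^ 2)) z)) := by
      by_cases hzS : z ∈ S
      · simp only [Set.indicator_of_mem hzS]
        simpa only [one_mul] using (tendsto_neg_mul_millsRatio_add hm (tendsto_const_nhds (x := z))).mul_const
          (Real.exp (-(q / 2) * z ^ 2))
      · simp only [Set.indicator_of_notMem hzS]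
        exact tendsto_const_nhds
    refine hlim.congr' ?_
    filter_upwards [hmem z hz] with i hi
    by_cases hzS : z ∈ S
    · rw [Set.indicator_of_mem hzS, Set.indicator_of_mem (Set.mem_Iic.2 (hi.2 hzS))]
    · rw [Set.indicator_of_notMem hzS, Set.indicator_of_notMem fun h => hzS (hi.1 (Set.mem_Iic.1 h))]

/-- Laplace's method when the range of integration `(-∞, y]` ends far below the centre `m` of the
Gaussian factor: the mass concentrates at the endpoint `y`, at scale `1 / (m - y)`. -/
lemma tendsto_integral_millsRatio_endpoint {ι : Type*} {l : Filter ι} [l.IsCountablyGenerated]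
    {q : ℝ} (hq : 0 < q) {m y : ι → ℝ} (hy : Tendsto y l atBot)
    (hk : Tendsto (fun i => m i - y i) l atTop) :
    Tendsto (fun i => -y i * (m i - y i) * Real.exp (q * (y i - m i) ^ 2 / 2) *
      ∫ x in Set.Iic (y i), millsRatio x * Real.exp (-q * (x - m i) ^ 2 / 2))
      l (𝓝 (1 / q)) := by
  have h := tendsto_mul_integral_mul_exp hq hk
    (G := fun i w => -y i * millsRatio (y i - w) * Real.exp (-q * w ^ 2 / 2))
    (fun i => ((measurable_millsRatio.comp (measurable_const_sub _)).const_mul _).mul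
      (by fun_prop))
    (by
      filter_upwards [hy.eventually_lt_atBot 0] with i hi w hw
      have hR := millsRatio_nonneg (y i - w)
      have h1 : -y i * millsRatio (y i - w) ≤ 1 :=
        (mul_le_mul_of_nonneg_right (by linarith) hR).trans
          (neg_mul_millsRatio_le_one (by linarith : y i - w < 0))
      have h2 : Real.exp (-q * w ^ 2 / 2) ≤ 1 :=
        Real.exp_le_one_iff.2 (by nlinarith [mul_nonneg hq.le (sq_nonneg w)])
      have h3 : 0 ≤ -y i * millsRatio (y i - w) := mul_nonneg (by linarith) hR
      rw [abs_of_nonneg (mul_nonneg h3 (Real.exp_pos _).le)]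
      exact mul_le_one₀ h1 (Real.exp_pos _).le h2)
    (fun v _ => by
      have h0 : Tendsto (fun i => v / (m i - y i)) l (𝓝 0) := tendsto_const_nhds.div_atTop hk
      have hc : Continuous fun w : ℝ => Real.exp (-q * w ^ 2 / 2) := by fun_prop
      have h1 := (tendsto_neg_mul_millsRatio_add hy h0.neg).mul ((hc.tendsto 0).comp h0)
      simpa [Function.comp_def, sub_eq_add_neg] using h1)
  refine h.congr fun i => ?_
  rw [integral_Iic_eq_integral_Ioi_sub, ← integral_const_mul, ← integral_const_mul]
  congr 1
  ext w
  have : Real.exp (q * (y i - m i) ^ 2 / 2) * Real.exp (-q * (y i - w - m i) ^ 2 / 2) =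
      Real.exp (-q * w ^ 2 / 2) * Real.exp (-q * (m i - y i) * w) := by
    rw [← Real.exp_add, ← Real.exp_add]; ring_nf
  linear_combination -((m i - y i) * (-y i) * millsRatio (y i - w)) * this

/-! ### The three regimes of the Route 1 integral -/

/-- Completing the square: the integral of Route 1 is a Gaussian integral of the Mills ratio,
centred at `-(a b f) / (1 + a²)`. -/
lemma integral_stdNormalCDF_mul_density (a b f y : ℝ) :
    ∫ x in Set.Iic y, stdNormalCDF x * ((√(2 * π))⁻¹ * Real.exp (-(a * x + b * f) ^ 2 / 2)) =
      (2 * π)⁻¹ * Real.exp (-(b ^ 2 / (1 + a ^ 2)) * f ^ 2 / 2) *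
        ∫ x in Set.Iic y, millsRatio x *
          Real.exp (-(1 + a ^ 2) * (x - -(a * b * f) / (1 + a ^ 2)) ^ 2 / 2) := by
  rw [← integral_const_mul]
  congr 1
  ext x
  have hs : (√(2 * π))⁻¹ * (√(2 * π))⁻¹ = (2 * π)⁻¹ := by
    rw [← mul_inv, Real.mul_self_sqrt (by positivity)]
  have he : Real.exp (-x ^ 2 / 2) * Real.exp (-(a * x + b * f) ^ 2 / 2) =
      Real.exp (-(b ^ 2 / (1 + a ^ 2)) * f ^ 2 / 2) *
        Real.exp (-(1 + a ^ 2) * (x - -(a * b * f) / (1 + a ^ 2)) ^ 2 / 2) := by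
    rw [← Real.exp_add, ← Real.exp_add]
    congr 1
    have : 1 + a ^ 2 ≠ 0 := by positivity
    field_simp
    ring
  rw [stdNormalCDF_eq_millsRatio x]
  linear_combination millsRatio x * (he * (√(2 * π))⁻¹ * (√(2 * π))⁻¹ +
    Real.exp (-(b ^ 2 / (1 + a ^ 2)) * f ^ 2 / 2) *
        Real.exp (-(1 + a ^ 2) * (x - -(a * b * f) / (1 + a ^ 2)) ^ 2 / 2) * hs)

/-- Corollary 2 of the paper: asymptotic behaviour of the integral term of
Route 1, in the three cases `β₁ > 0`, `β₁ = 0`, `β₁ < 0`. -/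
theorem route_one_integral_asymptotics (ρ α₁ α₂ γ₁ : ℝ)
    (hρ : ρ ∈ Set.Ioo (-1 : ℝ) 1) (hα₁ : α₁ ≠ 0) (hγ₁ : 0 < γ₁)
    (hγρ : 0 < γ₁ - ρ) (l₂ β₁ : ℝ)
    (hl₂ : l₂ = (α₂ + ρ * α₁) / Real.sqrt (1 + α₁ ^ 2 * (1 - ρ ^ 2)))
    (hβ₁ : β₁ = (γ₁ - ρ) / (1 - ρ ^ 2) + α₁ * (α₁ * γ₁ + α₂))
    (f₁ f₂ : ℝ → ℝ)
    (hf₂ : Tendsto f₂ (𝓝[>] (0 : ℝ)) atBot)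
    (hratio : Tendsto (fun u => f₂ u * (f₁ u / f₂ u - γ₁)) (𝓝[>] (0 : ℝ)) (𝓝 0))
    (A B J : ℝ → ℝ)
    (hA : A = fun u => f₁ u - ρ * f₂ u)
    (hB : B = fun u => α₁ * f₁ u + α₂ * f₂ u)
    (hJ : J = fun u =>
      (α₁ * Real.sqrt (1 - ρ ^ 2) / stdNormalCDF (l₂ * f₂ u)) *
        ∫ x in Set.Iic (A u / Real.sqrt (1 - ρ ^ 2)),
          stdNormalCDF x * ((Real.sqrt (2 * Real.pi))⁻¹ *
            Real.exp (-(α₁ * Real.sqrt (1 - ρ ^ 2) * x +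
              (α₂ + ρ * α₁) * f₂ u) ^ 2 / 2))) :
    (0 < β₁ →
      Tendsto (fun u => J u /
        (α₁ * Real.sqrt (1 - ρ ^ 2) *
            Real.exp (-(A u) ^ 2 / (2 * (1 - ρ ^ 2)) - (B u) ^ 2 / 2) /
          (2 * Real.pi * stdNormalCDF (l₂ * f₂ u) * |f₂ u| * |A u| * β₁)))
        (𝓝[>] (0 : ℝ)) (𝓝 1)) ∧
    (β₁ = 0 →
      Tendsto (fun u => J u /
        (α₁ * (1 - ρ ^ 2) * Real.exp (-l₂ ^ 2 * (f₂ u) ^ 2 / 2) /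
          (2 * Real.sqrt (2 * Real.pi) * stdNormalCDF (l₂ * f₂ u) * |A u| *
            Real.sqrt (1 + α₁ ^ 2 * (1 - ρ ^ 2)))))
        (𝓝[>] (0 : ℝ)) (𝓝 1)) ∧
    (β₁ < 0 →
      Tendsto (fun u => J u /
        (α₁ * Real.exp (-l₂ ^ 2 * (f₂ u) ^ 2 / 2) /
          (Real.sqrt (2 * Real.pi) * stdNormalCDF (l₂ * f₂ u) * |α₁ * l₂ * f₂ u|)))
        (𝓝[>] (0 : ℝ)) (𝓝 1)) := by
  have hs2pos : 0 < 1 - ρ ^ 2 := by nlinarith [hρ.1, hρ.2]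
  obtain ⟨s, hs⟩ : ∃ s, s = √(1 - ρ ^ 2) := ⟨_, rfl⟩
  have hspos : 0 < s := hs ▸ Real.sqrt_pos.2 hs2pos
  have hs2 : s ^ 2 = 1 - ρ ^ 2 := hs ▸ Real.sq_sqrt hs2pos.le
  obtain ⟨q, hq⟩ : ∃ q, q = 1 + (α₁ * s) ^ 2 := ⟨_, rfl⟩
  have hq' : 1 + α₁ ^ 2 * (1 - ρ ^ 2) = q := by rw [hq, ← hs2]; ring
  have hqpos : 0 < q := by rw [hq]; positivity
  have hqs : √q ^ 2 = q := Real.sq_sqrt hqpos.le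
  have hqspos : 0 < √q := Real.sqrt_pos.2 hqpos
  have hl₂sq : l₂ ^ 2 = (α₂ + ρ * α₁) ^ 2 / q := by rw [hl₂, hq', div_pow, hqs]
  rw [hq'] at hl₂
  rw [← hs] at hJ
  -- `y` is the endpoint of the integral, `m` the centre of the Gaussian factor of the integrand.
  obtain ⟨y, hy⟩ : ∃ y : ℝ → ℝ, y = fun u => A u / s := ⟨_, rfl⟩
  obtain ⟨m, hm⟩ : ∃ m : ℝ → ℝ, m = fun u => -(α₁ * s * (α₂ + ρ * α₁) * f₂ u) / q := ⟨_, rfl⟩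
  obtain ⟨K, hK⟩ : ∃ K : ℝ → ℝ, K = fun u => ∫ x in Set.Iic (y u), millsRatio x *
      Real.exp (-q * (x - m u) ^ 2 / 2) := ⟨_, rfl⟩
  have hAy : ∀ u, A u = s * y u := fun u => by rw [hy]; field_simp
  have hJK : ∀ u, J u = α₁ * s / stdNormalCDF (l₂ * f₂ u) *
      ((2 * π)⁻¹ * Real.exp (-l₂ ^ 2 * f₂ u ^ 2 / 2) * K u) := by
    intro u
    rw [hJ, hK, hl₂sq, hq, hm, hq, hy]
    simp only
    rw [integral_stdNormalCDF_mul_density]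
  have hf0 : ∀ᶠ u in 𝓝[>] (0 : ℝ), f₂ u < 0 := hf₂.eventually_lt_atBot 0
  -- The error in `A ≈ (γ₁ - ρ) f₂` is exactly what the hypothesis on `f₁ / f₂` controls.
  have he : Tendsto (fun u => A u - (γ₁ - ρ) * f₂ u) (𝓝[>] (0 : ℝ)) (𝓝 0) := by
    refine hratio.congr' ?_
    filter_upwards [hf0] with u hu
    have := hu.ne
    rw [hA]
    field_simp
    ring
  have hk : ∀ u, y u - m u = s * β₁ / q * f₂ u + (A u - (γ₁ - ρ) * f₂ u) / s := by
    intro u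
    have h1 : s ^ 2 * β₁ = (γ₁ - ρ) + s ^ 2 * (α₁ * (α₁ * γ₁ + α₂)) := by
      rw [hβ₁, hs2]; field_simp
    have h2 : q - 1 = α₁ ^ 2 * s ^ 2 := by rw [hq]; ring
    rw [hy, hm]
    field_simp
    linear_combination (-f₂ u) * h1 + (γ₁ - ρ) * f₂ u * h2
  have hyf : Tendsto (fun u => y u / f₂ u) (𝓝[>] (0 : ℝ)) (𝓝 ((γ₁ - ρ) / s)) := by
    have h := ((he.div_atBot hf₂).const_add (γ₁ - ρ)).div_const s
    rw [add_zero] at h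
    refine h.congr' ?_
    filter_upwards [hf0] with u hu
    have := hu.ne
    rw [hy]
    field_simp
    ring
  have hkf : Tendsto (fun u => (y u - m u) / f₂ u) (𝓝[>] (0 : ℝ)) (𝓝 (s * β₁ / q)) := by
    have h := ((he.div_const s).div_atBot hf₂).const_add (s * β₁ / q)
    rw [add_zero] at h
    refine h.congr' ?_
    filter_upwards [hf0] with u hu
    have := hu.ne
    rw [hk]
    field_simp
  have hybot : Tendsto y (𝓝[>] (0 : ℝ)) atBot := by
    refine (hyf.pos_mul_atBot (by positivity) hf₂).congr' ?_
    filter_upwards [hf0] with u hu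
    exact div_mul_cancel₀ _ hu.ne
  have hy0 : ∀ᶠ u in 𝓝[>] (0 : ℝ), y u < 0 := hybot.eventually_lt_atBot 0
  have hmy : Tendsto (fun u => m u / y u) (𝓝[>] (0 : ℝ))
      (𝓝 (1 - s * β₁ / q / ((γ₁ - ρ) / s))) := by
    refine ((hkf.div hyf (by positivity)).const_sub 1).congr' ?_
    filter_upwards [hf0, hy0] with u hu hyu
    have := hu.ne
    have := hyu.ne
    simp only [Pi.div_apply]
    field_simp
    ring
  have hP : √(2 * π) ^ 2 = 2 * π := Real.sq_sqrt (by positivity)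
  have hPpos : 0 < √(2 * π) := by positivity
  have hgauss : √(π / (q / 2)) = √(2 * π) / √q := by
    rw [← Real.sqrt_div (by positivity)]
    congr 1
    field_simp
  refine ⟨fun hβ => ?_, fun hβ => ?_, fun hβ => ?_⟩
  · have hmk : Tendsto (fun u => m u - y u) (𝓝[>] (0 : ℝ)) atTop := by
      refine (tendsto_neg_atBot_atTop.comp (hkf.pos_mul_atBot (by positivity) hf₂)).congr' ?_
      filter_upwards [hf0] with u hu
      simp only [Function.comp]
      rw [div_mul_cancel₀ _ hu.ne]
      ring
    have h1 := tendsto_integral_millsRatio_endpoint hqpos hybot hmk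
    have h2 : Tendsto (fun u => s * β₁ / ((y u - m u) / f₂ u)) (𝓝[>] (0 : ℝ))
        (𝓝 (s * β₁ / (s * β₁ / q))) := tendsto_const_nhds.div hkf (by positivity)
    have h3 := h1.mul h2
    have e : 1 / q * (s * β₁ / (s * β₁ / q)) = 1 := by field_simp
    rw [e] at h3
    refine h3.congr' ?_
    filter_upwards [hf0, hy0, hmk.eventually_gt_atTop 0] with u hu hyu hmu
    have hAB : Real.exp (-l₂ ^ 2 * f₂ u ^ 2 / 2) =
        Real.exp (q * (y u - m u) ^ 2 / 2) *
          Real.exp (-A u ^ 2 / (2 * (1 - ρ ^ 2)) - B u ^ 2 / 2) := by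
      rw [← Real.exp_add]
      congr 1
      have hB' : B u = α₁ * s * y u + (α₂ + ρ * α₁) * f₂ u := by
        rw [hB, hy, hA]; field_simp; ring
      rw [hB', hAy, ← hs2, hl₂sq, hm]
      field_simp
      rw [hq]
      ring
    rw [hJK, hAB, abs_of_neg hu, abs_of_neg (by rw [hAy]; exact mul_neg_of_pos_of_neg hspos hyu),
      hAy, ← hs]
    have hΦ := (stdNormalCDF_pos (l₂ * f₂ u)).ne'
    have hE := (Real.exp_pos (-(s * y u) ^ 2 / (2 * (1 - ρ ^ 2)) - B u ^ 2 / 2)).ne'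
    have hne : m u - y u ≠ 0 := hmu.ne'
    have hne' : y u - m u ≠ 0 := by intro h; apply hne; linarith
    have := hu.ne
    have hKu : (∫ x in Set.Iic (y u), millsRatio x * Real.exp (-q * (x - m u) ^ 2 / 2)) = K u := by
      rw [hK]
    rw [hKu]
    generalize stdNormalCDF (l₂ * f₂ u) = Φ at hΦ ⊢
    field_simp
    ring
  · have hk0 : Tendsto (fun u => y u - m u) (𝓝[>] (0 : ℝ)) (𝓝 0) := by
      simp only [hk, hβ]
      simpa using he.div_const s
    have hmbot : Tendsto m (𝓝[>] (0 : ℝ)) atBot := by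
      refine (hybot.atBot_add hk0.neg).congr fun u => by ring
    have h1 := tendsto_integral_millsRatio_peak hqpos hmbot hybot hmy
      (measurableSet_Iic (a := (0 : ℝ))) (fun z hz => by
        rcases hz.lt_or_gt with hz | hz
        · filter_upwards [hk0.eventually_const_lt hz] with u hu
          exact iff_of_true hu.le hz.le
        · filter_upwards [hk0.eventually_lt_const hz] with u hu
          exact iff_of_false hu.not_ge hz.not_ge)
    have hhalf : ∫ z in Set.Iic (0 : ℝ), Real.exp (-(q / 2) * z ^ 2) = √(2 * π) / √q / 2 := by
      rw [integral_Iic_eq_integral_Ioi_sub, ← hgauss, ← integral_gaussian_Ioi]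
      simp
    rw [hhalf] at h1
    rw [hβ] at hmy
    have h2 := hmy.inv₀ (by simp)
    have h3 := (h1.mul h2).mul_const (√q * √(2 * π) / π)
    have e : √(2 * π) / √q / 2 * (1 - s * 0 / q / ((γ₁ - ρ) / s))⁻¹ * (√q * √(2 * π) / π) = 1 := by
      simp only [mul_zero, zero_div, sub_zero, inv_one, mul_one]
      field_simp
      linear_combination hP
    rw [e] at h3
    refine h3.congr' ?_
    filter_upwards [hy0, hmbot.eventually_lt_atBot 0] with u hyu hmu
    rw [hJK, abs_of_neg (by rw [hAy]; exact mul_neg_of_pos_of_neg hspos hyu), hAy, ← hs2,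
      hs2, hq', ← hs2]
    have hΦ := (stdNormalCDF_pos (l₂ * f₂ u)).ne'
    have hKu : (∫ x in Set.Iic (y u), millsRatio x * Real.exp (-q * (x - m u) ^ 2 / 2)) = K u := by
      rw [hK]
    have := hmu.ne
    have := hyu.ne
    rw [hKu]
    field_simp
  · have hk1 : Tendsto (fun u => y u - m u) (𝓝[>] (0 : ℝ)) atTop := by
      have hneg : s * β₁ / q < 0 := div_neg_of_neg_of_pos (mul_neg_of_pos_of_neg hspos hβ) hqpos
      refine (hkf.neg_mul_atBot hneg hf₂).congr' ?_
      filter_upwards [hf0] with u hu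
      exact div_mul_cancel₀ _ hu.ne
    have hmbot : Tendsto m (𝓝[>] (0 : ℝ)) atBot := by
      refine (hybot.atBot_add_atBot (tendsto_neg_atTop_atBot.comp hk1)).congr fun u => ?_
      simp only [Function.comp]
      ring
    have h1 := tendsto_integral_millsRatio_peak hqpos hmbot hybot hmy MeasurableSet.univ
      (fun z _ => by
        filter_upwards [hk1.eventually_ge_atTop z] with u hu
        exact iff_of_true hu (Set.mem_univ z))
    rw [setIntegral_univ, integral_gaussian, hgauss] at h1
    have h3 := h1.mul_const (√q / √(2 * π))
    have e : √(2 * π) / √q * (√q / √(2 * π)) = 1 := by field_simp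
    rw [e] at h3
    refine h3.congr' ?_
    filter_upwards [hmbot.eventually_lt_atBot 0] with u hmu
    have habs : |α₁ * l₂ * f₂ u| = -m u * √q / s := by
      have h : α₁ * l₂ * f₂ u = -(m u * √q / s) := by
        rw [hl₂, hm]
        field_simp
        linear_combination -((α₂ + ρ * α₁) * f₂ u) * hqs
      rw [h, abs_neg, abs_of_neg (div_neg_of_neg_of_pos (mul_neg_of_neg_of_pos hmu hqspos) hspos)]
      ring
    rw [hJK, habs]
    have hΦ := (stdNormalCDF_pos (l₂ * f₂ u)).ne'
    have hKu : (∫ x in Set.Iic (y u), millsRatio x * Real.exp (-q * (x - m u) ^ 2 / 2)) = K u := by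
      rw [hK]
    have := hmu.ne
    rw [hKu]
    field_simp
    linear_combination K u * hP
end
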